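/- arXiv:1304.3504 — 2 statements merged into one kernel-verified Lean document; each statement's English description precedes it below -/
import Mathlib

section
/- Let f = (f^1,…,f^m) : ℝ^n → ℝ^m be a C² map. Then at every point of ℝ^n, 2 Σ over i,k,l,α,β of M_{kl} U^{αβ} (f_{ii}^β f_{kl}^α − f_{ik}^β f_{il}^α) equals −Σ over i,k,α,β of (∂_i U^{αβ})(f_i^β f_{kk}^α − f_k^β f_{ik}^α) − Σ over i,k,α,β,γ,μ of U^{αγ} U^{βμ} ⟨Df^γ, Df_i^μ⟩ ∂_k F_{ik}^{βα}, where M_{ij} = δ_{ij} − g^{ij} and F_{ik}^{βα} = f_i^β f_k^α − f_k^β f_i^α. -/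
open MeasureTheory Filter Matrix
open scoped Topology

noncomputable section

/-- Partial derivative ∂φ/∂x_i. -/
def pd {n : ℕ} (φ : EuclideanSpace ℝ (Fin n) → ℝ) (i : Fin n)
    (x : EuclideanSpace ℝ (Fin n)) : ℝ :=
  fderiv ℝ φ x (EuclideanSpace.single i 1)

/-- Second partial derivative ∂²φ/∂x_i∂x_j. -/
def pd2 {n : ℕ} (φ : EuclideanSpace ℝ (Fin n) → ℝ) (i j : Fin n)
    (x : EuclideanSpace ℝ (Fin n)) : ℝ :=
  pd (pd φ j) i x

/-- Induced metric of the graph of `f`: g_{ij} = δ_{ij} + f_i^α f_j^α. -/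
def gmat {n m : ℕ} (f : Fin m → EuclideanSpace ℝ (Fin n) → ℝ)
    (x : EuclideanSpace ℝ (Fin n)) : Matrix (Fin n) (Fin n) ℝ :=
  Matrix.of fun i j => (if i = j then (1:ℝ) else 0) + ∑ α, pd (f α) i x * pd (f α) j x

/-- Gram matrix of the normal frame: U_{αβ} = δ_{αβ} + ⟨Df^α, Df^β⟩. -/
def Umat {n m : ℕ} (f : Fin m → EuclideanSpace ℝ (Fin n) → ℝ)
    (x : EuclideanSpace ℝ (Fin n)) : Matrix (Fin m) (Fin m) ℝ :=
  Matrix.of fun α β => (if α = β then (1:ℝ) else 0) + ∑ i, pd (f α) i x * pd (f β) i x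

/-- Scalar curvature of the graph of `f`:
S = g^{ij} g^{kl} U^{αβ} (f_{ij}^β f_{kl}^α − f_{ik}^β f_{jl}^α). -/
def Sc {n m : ℕ} (f : Fin m → EuclideanSpace ℝ (Fin n) → ℝ)
    (x : EuclideanSpace ℝ (Fin n)) : ℝ :=
  ∑ i, ∑ j, ∑ k, ∑ l, ∑ α, ∑ β,
    (gmat f x)⁻¹ i j * (gmat f x)⁻¹ k l * (Umat f x)⁻¹ α β *
      (pd2 (f β) i j x * pd2 (f α) k l x - pd2 (f β) i k x * pd2 (f α) j l x)

/-- Contraction S^⊥ of the normal curvature tensor of the graph of `f`: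
S^⊥ = U^{αγ} U^{βμ} (⟨Df_k^γ, Df_i^μ⟩ + U^{θν} ⟨Df_i^μ, Df^ν⟩ ⟨Df_k^γ, Df^θ⟩)
        (f_i^α f_k^β − f_i^β f_k^α). -/
def Sperp {n m : ℕ} (f : Fin m → EuclideanSpace ℝ (Fin n) → ℝ)
    (x : EuclideanSpace ℝ (Fin n)) : ℝ :=
  ∑ i, ∑ k, ∑ α, ∑ β, ∑ γ, ∑ μ,
    (Umat f x)⁻¹ α γ * (Umat f x)⁻¹ β μ *
      ((∑ l, pd2 (f γ) k l x * pd2 (f μ) i l x) +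
        ∑ θ, ∑ ν, (Umat f x)⁻¹ θ ν * (∑ l, pd2 (f μ) i l x * pd (f ν) l x) *
          (∑ l, pd2 (f γ) k l x * pd (f θ) l x)) *
      (pd (f α) i x * pd (f β) k x - pd (f β) i x * pd (f α) k x)

/-- ω_{n−1}: the (n−1)-dimensional (Hausdorff) volume of the unit sphere in ℝ^n. -/
def sphereVol (n : ℕ) : ℝ :=
  (μH[(n:ℝ) - 1] (Metric.sphere (0 : EuclideanSpace ℝ (Fin n)) 1)).toReal

/-- The ADM mass integrand (∂_i g_{ij} − ∂_j g_{ii}) (x_j/r), summed over i, j. -/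
def admIntegrand {n m : ℕ} (f : Fin m → EuclideanSpace ℝ (Fin n) → ℝ) (r : ℝ)
    (x : EuclideanSpace ℝ (Fin n)) : ℝ :=
  ∑ i, ∑ j, (pd (fun y => gmat f y i j) i x - pd (fun y => gmat f y i i) j x) * (x j / r)

/-- M_{ij} = δ_{ij} − g^{ij}. -/
def Mmat {n m : ℕ} (f : Fin m → EuclideanSpace ℝ (Fin n) → ℝ)
    (x : EuclideanSpace ℝ (Fin n)) (i j : Fin n) : ℝ :=
  (if i = j then (1:ℝ) else 0) - (gmat f x)⁻¹ i j

/-- F_{ik}^{βα} = f_i^β f_k^α − f_k^β f_i^α, as a function of the point. -/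
def Fik {n m : ℕ} (f : Fin m → EuclideanSpace ℝ (Fin n) → ℝ) (β α : Fin m) (i k : Fin n)
    (x : EuclideanSpace ℝ (Fin n)) : ℝ :=
  pd (f β) i x * pd (f α) k x - pd (f β) k x * pd (f α) i x

lemma pd_cd {n : ℕ} {φ : EuclideanSpace ℝ (Fin n) → ℝ} (h : ContDiff ℝ 2 φ) (i : Fin n) :
    ContDiff ℝ 1 (pd φ i) := by
  unfold pd
  exact (h.fderiv_right (m := 1) (by norm_num)).clm_apply contDiff_const

lemma pd_diff {n : ℕ} {φ : EuclideanSpace ℝ (Fin n) → ℝ} (h : ContDiff ℝ 2 φ) (i : Fin n)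
    (x : EuclideanSpace ℝ (Fin n)) : DifferentiableAt ℝ (pd φ i) x :=
  ((pd_cd h i).differentiable (by norm_num)) x

lemma pd2_symm {n : ℕ} {φ : EuclideanSpace ℝ (Fin n) → ℝ} (h : ContDiff ℝ 2 φ) (i j : Fin n)
    (x : EuclideanSpace ℝ (Fin n)) : pd2 φ i j x = pd2 φ j i x := by
  have hd : DifferentiableAt ℝ (fderiv ℝ φ) x :=
    ((h.fderiv_right (m := 1) (by norm_num)).differentiable (by norm_num)) x
  have key : ∀ a b : Fin n, pd2 φ a b x =
      fderiv ℝ (fderiv ℝ φ) x (EuclideanSpace.single a 1) (EuclideanSpace.single b 1) := by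
    intro a b
    unfold pd2
    have h2 : HasFDerivAt (pd φ b) _ x :=
      hd.hasFDerivAt.clm_apply (hasFDerivAt_const (EuclideanSpace.single b (1:ℝ)) x)
    rw [pd, h2.fderiv]
    simp
  rw [key, key]
  have hs : IsSymmSndFDerivAt ℝ φ x := (h.contDiffAt).isSymmSndFDerivAt (by simp)
  exact hs _ _

lemma pd_mul {n : ℕ} {φ ψ : EuclideanSpace ℝ (Fin n) → ℝ} {x : EuclideanSpace ℝ (Fin n)}
    (h : DifferentiableAt ℝ φ x) (h' : DifferentiableAt ℝ ψ x) (i : Fin n) :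
    pd (fun y => φ y * ψ y) i x = pd φ i x * ψ x + φ x * pd ψ i x := by
  unfold pd
  rw [fderiv_fun_mul h h']
  simp; ring

lemma pd_Fik {n m : ℕ} {f : Fin m → EuclideanSpace ℝ (Fin n) → ℝ}
    (hf : ∀ α, ContDiff ℝ 2 (f α)) (β α : Fin m) (i k j : Fin n) (x : EuclideanSpace ℝ (Fin n)) :
    pd (Fik f β α i k) j x = pd2 (f β) j i x * pd (f α) k x + pd (f β) i x * pd2 (f α) j k x
      - (pd2 (f β) j k x * pd (f α) i x + pd (f β) k x * pd2 (f α) j i x) := by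
  have hd := fun a i => pd_diff (hf a) i x
  have e : pd (Fik f β α i k) j x = pd (fun y => pd (f β) i y * pd (f α) k y) j x
      - pd (fun y => pd (f β) k y * pd (f α) i y) j x := by
    unfold Fik
    have h1 : DifferentiableAt ℝ (fun y => pd (f β) i y * pd (f α) k y) x := (hd _ _).mul (hd _ _)
    have h2 : DifferentiableAt ℝ (fun y => pd (f β) k y * pd (f α) i y) x := (hd _ _).mul (hd _ _)
    rw [pd, fderiv_fun_sub h1 h2]
    rfl
  rw [e, pd_mul (hd _ _) (hd _ _), pd_mul (hd _ _) (hd _ _)]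
  rfl

lemma pd_U {n m : ℕ} {f : Fin m → EuclideanSpace ℝ (Fin n) → ℝ}
    (hf : ∀ α, ContDiff ℝ 2 (f α)) (α β : Fin m) (j : Fin n) (x : EuclideanSpace ℝ (Fin n)) :
    DifferentiableAt ℝ (fun y => Umat f y α β) x ∧
    pd (fun y => Umat f y α β) j x =
      (∑ l, pd2 (f α) j l x * pd (f β) l x) + ∑ l, pd2 (f β) j l x * pd (f α) l x := by
  have hd := fun a i => pd_diff (hf a) i x
  have hs : ∀ i ∈ (Finset.univ : Finset (Fin n)),
      DifferentiableAt ℝ (fun y => pd (f α) i y * pd (f β) i y) x :=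
    fun i _ => (hd α i).mul (hd β i)
  simp only [Umat, Matrix.of_apply]
  refine ⟨(DifferentiableAt.fun_sum hs).const_add _, ?_⟩
  rw [pd, fderiv_const_add, fderiv_fun_sum hs, _root_.sum_apply,
    ← Finset.sum_add_distrib]
  refine Finset.sum_congr rfl fun i _ => ?_
  have := pd_mul (hd α i) (hd β i) j
  rw [pd] at this
  rw [this]; unfold pd2; ring

lemma U_posDef {n m : ℕ} (f : Fin m → EuclideanSpace ℝ (Fin n) → ℝ)
    (x : EuclideanSpace ℝ (Fin n)) : IsUnit (Umat f x).det := by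
  have e : Umat f x = 1 + (Matrix.of fun α i => pd (f α) i x) *
      (Matrix.of fun α i => pd (f α) i x)ᴴ := by
    ext α β; simp [Umat, Matrix.mul_apply, Matrix.one_apply]
  have : (Umat f x).PosDef := by
    rw [e]; exact Matrix.PosDef.one.add_posSemidef (Matrix.posSemidef_self_mul_conjTranspose _)
  exact this.det_pos.ne'.isUnit

lemma g_posDef {n m : ℕ} (f : Fin m → EuclideanSpace ℝ (Fin n) → ℝ)
    (x : EuclideanSpace ℝ (Fin n)) : IsUnit (gmat f x).det := by
  have e : gmat f x = 1 + (Matrix.of fun α i => pd (f α) i x)ᴴ *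
      (Matrix.of fun α i => pd (f α) i x) := by
    ext α β; simp [gmat, Matrix.mul_apply, Matrix.one_apply]
  have : (gmat f x).PosDef := by
    rw [e]; exact Matrix.PosDef.one.add_posSemidef (Matrix.posSemidef_conjTranspose_mul_self _)
  exact this.det_pos.ne'.isUnit

lemma V_symm {n m : ℕ} (f : Fin m → EuclideanSpace ℝ (Fin n) → ℝ)
    (x : EuclideanSpace ℝ (Fin n)) (α β : Fin m) : (Umat f x)⁻¹ α β = (Umat f x)⁻¹ β α := by
  have : (Umat f x)ᵀ = Umat f x := by
    ext α β; simp [Umat, mul_comm, eq_comm]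
  conv_lhs => rw [← this, ← Matrix.transpose_nonsing_inv]
  rfl

lemma M_eq {n m : ℕ} (f : Fin m → EuclideanSpace ℝ (Fin n) → ℝ)
    (x : EuclideanSpace ℝ (Fin n)) (k l : Fin n) :
    Mmat f x k l = ∑ γ, ∑ μ, (Umat f x)⁻¹ γ μ * pd (f γ) k x * pd (f μ) l x := by
  set P : Matrix (Fin m) (Fin n) ℝ := Matrix.of fun α i => pd (f α) i x with hP
  have eg : gmat f x = 1 + Pᵀ * P := by
    ext α β; simp [gmat, Matrix.mul_apply, Matrix.one_apply, hP]
  have eU : Umat f x = 1 + P * Pᵀ := by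
    ext α β; simp [Umat, Matrix.mul_apply, Matrix.one_apply, hP]
  have hU := Matrix.mul_nonsing_inv _ (U_posDef f x)
  have hg := g_posDef f x
  have h1 : gmat f x * (1 - Pᵀ * (Umat f x)⁻¹ * P) = 1 := by
    have h2 : gmat f x * Pᵀ = Pᵀ * Umat f x := by
      rw [eg, eU]; simp [Matrix.add_mul, Matrix.mul_add, Matrix.mul_assoc]
    have h3 : gmat f x * (Pᵀ * (Umat f x)⁻¹ * P) = Pᵀ * P := by
      rw [← Matrix.mul_assoc, ← Matrix.mul_assoc, h2, Matrix.mul_assoc Pᵀ, hU, Matrix.mul_one]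
    rw [Matrix.mul_sub, h3, eg]; simp
  have h4 := Matrix.inv_eq_right_inv h1
  rw [Mmat, h4]
  simp only [Matrix.sub_apply, Matrix.one_apply, sub_sub_cancel, Matrix.mul_apply,
    Matrix.transpose_apply, Finset.sum_mul, hP, Matrix.of_apply]
  rw [Finset.sum_comm]
  refine Finset.sum_congr rfl fun _ _ => Finset.sum_congr rfl fun _ _ => by ring

section
attribute [local instance] Matrix.linftyOpNormedRing Matrix.linftyOpNormedAlgebra

lemma V_diff {n m : ℕ} {f : Fin m → EuclideanSpace ℝ (Fin n) → ℝ}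
    (hf : ∀ α, ContDiff ℝ 2 (f α)) (x : EuclideanSpace ℝ (Fin n)) (α β : Fin m) :
    DifferentiableAt ℝ (fun y => (Umat f y)⁻¹ α β) x := by
  have hU : DifferentiableAt ℝ (fun y => Umat f y) x := by
    refine differentiableAt_pi.2 fun a => differentiableAt_pi.2 fun b => ?_
    simp only [Umat, Matrix.of_apply]
    exact (DifferentiableAt.fun_sum fun i _ => (pd_diff (hf a) i x).mul (pd_diff (hf b) i x)).const_add _
  have h1 : DifferentiableAt ℝ (Ring.inverse : Matrix (Fin m) (Fin m) ℝ → _) (Umat f x) :=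
    differentiableAt_inverse ((Matrix.isUnit_iff_isUnit_det _).2 (U_posDef f x))
  have h2 := h1.comp x hU
  have h3 : DifferentiableAt ℝ (fun y => (Umat f y)⁻¹) x := by
    simp only [Matrix.nonsing_inv_eq_ringInverse]
    exact h2
  exact differentiableAt_pi.1 (differentiableAt_pi.1 h3 α) β
end

lemma pd_V {n m : ℕ} {f : Fin m → EuclideanSpace ℝ (Fin n) → ℝ}
    (hf : ∀ α, ContDiff ℝ 2 (f α)) (x : EuclideanSpace ℝ (Fin n)) (α β : Fin m) (i : Fin n) :
    pd (fun y => (Umat f y)⁻¹ α β) i x = - ∑ γ, ∑ μ, (Umat f x)⁻¹ α γ *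
      (pd (fun y => Umat f y γ μ) i x) * (Umat f x)⁻¹ μ β := by
  set V := (Umat f x)⁻¹ with hV
  set dV : Matrix (Fin m) (Fin m) ℝ := Matrix.of fun a b => pd (fun y => (Umat f y)⁻¹ a b) i x
  set dU : Matrix (Fin m) (Fin m) ℝ := Matrix.of fun a b => pd (fun y => Umat f y a b) i x
  have h : dU * V + Umat f x * dV = 0 := by
    ext a b
    have hd : ∀ c ∈ (Finset.univ : Finset (Fin m)),
        DifferentiableAt ℝ (fun y => Umat f y a c * (Umat f y)⁻¹ c b) x :=
      fun c _ => ((pd_U hf a c i x).1).mul (V_diff hf x c b)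
    have e : (fun y => ∑ c, Umat f y a c * (Umat f y)⁻¹ c b) =
        fun _ => (1 : Matrix (Fin m) (Fin m) ℝ) a b := by
      funext y
      rw [← Matrix.mul_apply, Matrix.mul_nonsing_inv _ (U_posDef f y)]
    have e2 : pd (fun y => ∑ c, Umat f y a c * (Umat f y)⁻¹ c b) i x = 0 := by
      rw [e]; simp [pd]
    rw [pd, fderiv_fun_sum hd, _root_.sum_apply] at e2
    rw [Matrix.add_apply, Matrix.mul_apply, Matrix.mul_apply, ← Finset.sum_add_distrib,
      Matrix.zero_apply, ← e2]
    refine Finset.sum_congr rfl fun c _ => ?_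
    exact (pd_mul (pd_U hf a c i x).1 (V_diff hf x c b) i).symm
  have h2 : dV = -(V * dU * V) := by
    have h3 : V * (dU * V + Umat f x * dV) = 0 := by rw [h, Matrix.mul_zero]
    rw [Matrix.mul_add, ← Matrix.mul_assoc, ← Matrix.mul_assoc, hV,
      Matrix.nonsing_inv_mul _ (U_posDef f x), Matrix.one_mul] at h3
    exact eq_neg_of_add_eq_zero_right h3
  have h4 := congrFun (congrFun h2 α) β
  change pd _ i x = _ at h4
  rw [h4, Matrix.neg_apply, Matrix.mul_apply, Finset.sum_comm]
  simp only [Matrix.mul_apply, Finset.sum_mul]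
  rfl

lemma alg1 {m : ℕ} (V A Q : Fin m → Fin m → ℝ) (hV : ∀ a b, V a b = V b a) :
    -(∑ α, ∑ β, (-∑ γ, ∑ μ, V α γ * (A γ μ + A μ γ) * V μ β) * Q β α)
      - ∑ α, ∑ β, ∑ γ, ∑ μ, V α γ * V β μ * A μ γ * (Q β α - Q α β)
    = 2 * ∑ α, ∑ β, ∑ γ, ∑ μ, V α γ * V β μ * A γ μ * Q β α := by
  have e : ∑ α, ∑ β, ∑ γ, ∑ μ, V α γ * V β μ * A μ γ * Q α β
      = ∑ α, ∑ β, ∑ γ, ∑ μ, V α γ * V β μ * A γ μ * Q β α := by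
    rw [Finset.sum_comm]
    refine Finset.sum_congr rfl fun α _ => Finset.sum_congr rfl fun β _ => ?_
    rw [Finset.sum_comm]
    refine Finset.sum_congr rfl fun γ _ => Finset.sum_congr rfl fun μ _ => by ring
  rw [two_mul]
  nth_rw 1 [← e]
  simp only [neg_mul, Finset.sum_neg_distrib, neg_neg, Finset.sum_mul, ← Finset.sum_sub_distrib,
    ← Finset.sum_add_distrib]
  refine Finset.sum_congr rfl fun α _ => Finset.sum_congr rfl fun β _ =>
    Finset.sum_congr rfl fun γ _ => Finset.sum_congr rfl fun μ _ => ?_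
  rw [hV μ β]; ring

lemma alg2 {n m : ℕ} (V : Fin m → Fin m → ℝ) (P : Fin m → Fin n → ℝ)
    (H : Fin m → Fin n → Fin n → ℝ) (hV : ∀ a b, V a b = V b a) :
    ∑ i, ∑ k, ∑ l, ∑ α, ∑ β, (∑ γ, ∑ μ, V γ μ * P γ k * P μ l) * V α β *
        (H β i i * H α k l - H β i k * H α i l)
    = ∑ i, ∑ α, ∑ β, ∑ γ, ∑ μ, V α γ * V β μ * (∑ l, H γ i l * P μ l) *
        ∑ k, (P β i * H α k k - P β k * H α i k) := by
  have e1 : ∑ i, ∑ k, ∑ l, ∑ α, ∑ β, ∑ γ, ∑ μ, V γ μ * P γ k * P μ l * V α β * (H β i i * H α k l)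
     = ∑ i, ∑ α, ∑ β, ∑ γ, ∑ μ, ∑ k, ∑ l, V α γ * V β μ * (H γ i l * P μ l) * (P β i * H α k k) := by
    simp only [← Fintype.sum_prod_type']
    refine Finset.sum_nbij' (fun (i, k, l, α, β, γ, μ) => (k, β, γ, α, μ, i, l))
      (fun (k, β, γ, α, μ, i, l) => (i, k, l, α, β, γ, μ)) ?_ ?_ ?_ ?_ ?_
    · simp
    · simp
    · simp
    · simp
    · rintro ⟨i, k, l, α, β, γ, μ⟩ _
      simp only
      rw [hV α β]; ring
  have e2 : ∑ i, ∑ k, ∑ l, ∑ α, ∑ β, ∑ γ, ∑ μ, V γ μ * P γ k * P μ l * V α β * (H β i k * H α i l)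
     = ∑ i, ∑ α, ∑ β, ∑ γ, ∑ μ, ∑ k, ∑ l, V α γ * V β μ * (H γ i l * P μ l) * (P β k * H α i k) := by
    simp only [← Fintype.sum_prod_type']
    refine Finset.sum_nbij' (fun (i, k, l, α, β, γ, μ) => (i, β, γ, α, μ, k, l))
      (fun (i, β, γ, α, μ, k, l) => (i, k, l, α, β, γ, μ)) ?_ ?_ ?_ ?_ ?_
    · simp
    · simp
    · simp
    · simp
    · rintro ⟨i, k, l, α, β, γ, μ⟩ _
      simp only
      rw [hV α β]; ring
  simp only [Finset.sum_mul, Finset.mul_sum, mul_sub, Finset.sum_sub_distrib] at e1 e2 ⊢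
  rw [e1, e2]

/-- Lemma 2.3(iii): pointwise,
2 Σ_{i,k,l,α,β} M_{kl} U^{αβ} (f_{ii}^β f_{kl}^α − f_{ik}^β f_{il}^α)
 = −Σ_{i,k,α,β} (∂_i U^{αβ})(f_i^β f_{kk}^α − f_k^β f_{ik}^α)
   −Σ_{i,k,α,β,γ,μ} U^{αγ} U^{βμ} ⟨Df^γ, Df_i^μ⟩ ∂_k F_{ik}^{βα}. -/
theorem lemma_2_3_iii (n m : ℕ) (f : Fin m → EuclideanSpace ℝ (Fin n) → ℝ)
    (hf : ∀ α, ContDiff ℝ 2 (f α)) :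
    ∀ x : EuclideanSpace ℝ (Fin n),
      2 * (∑ i, ∑ k, ∑ l, ∑ α, ∑ β, Mmat f x k l * (Umat f x)⁻¹ α β *
            (pd2 (f β) i i x * pd2 (f α) k l x - pd2 (f β) i k x * pd2 (f α) i l x)) =
      -(∑ i, ∑ k, ∑ α, ∑ β, pd (fun y => (Umat f y)⁻¹ α β) i x *
            (pd (f β) i x * pd2 (f α) k k x - pd (f β) k x * pd2 (f α) i k x)) -
        ∑ i, ∑ k, ∑ α, ∑ β, ∑ γ, ∑ μ, (Umat f x)⁻¹ α γ * (Umat f x)⁻¹ β μ *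
          (∑ l, pd (f γ) l x * pd2 (f μ) i l x) * pd (Fik f β α i k) k x := by
  intro x
  have hH := fun a i j => pd2_symm (hf a) i j x
  simp only [M_eq, pd_Fik hf, pd_V hf, (pd_U hf _ _ _ x).2]
  rw [alg2 ((Umat f x)⁻¹ : Matrix (Fin m) (Fin m) ℝ) (fun a i => pd (f a) i x) (fun a i j => pd2 (f a) i j x)
    (V_symm f x), Finset.mul_sum, ← Finset.sum_neg_distrib, ← Finset.sum_sub_distrib]
  refine Finset.sum_congr rfl fun i _ => ?_
  rw [← alg1 ((Umat f x)⁻¹ : Matrix (Fin m) (Fin m) ℝ) (fun γ μ => ∑ l, pd2 (f γ) i l x * pd (f μ) l x)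
    (fun β α => ∑ k, (pd (f β) i x * pd2 (f α) k k x - pd (f β) k x * pd2 (f α) i k x))
    (V_symm f x)]
  congr 1
  · congr 1
    symm
    rw [Finset.sum_comm]
    refine Finset.sum_congr rfl fun α _ => ?_
    rw [Finset.sum_comm]
    refine Finset.sum_congr rfl fun β _ => ?_
    rw [Finset.mul_sum]
  · symm
    rw [Finset.sum_comm]
    refine Finset.sum_congr rfl fun α _ => ?_
    rw [Finset.sum_comm]
    refine Finset.sum_congr rfl fun β _ => ?_
    rw [Finset.sum_comm]
    refine Finset.sum_congr rfl fun γ _ => ?_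
    rw [Finset.sum_comm]
    refine Finset.sum_congr rfl fun μ _ => ?_
    rw [← Finset.mul_sum, ← Finset.sum_sub_distrib]
    congr 1
    · congr 1
      exact Finset.sum_congr rfl fun l _ => mul_comm _ _
    · refine Finset.sum_congr rfl fun k _ => ?_
      rw [hH β k i, hH α k i]; ring
end
end

section
/- Let f = (f^1,…,f^m) : ℝ^n → ℝ^m be a C² map. Then at every point of ℝ^n, Σ over i,j,k,l,α,β of M_{ji} M_{kl} U^{αβ} (f_{ij}^β f_{kl}^α − f_{ik}^β f_{lj}^α) equals Σ over i,k,α,β,ν,μ,θ,γ of U^{αν} U^{βμ} U^{θγ} ⟨Df^μ, Df_i^γ⟩ ⟨Df^ν, Df_k^θ⟩ F_{ik}^{βα}, where M_{ij} = δ_{ij} − g^{ij} and F_{ik}^{βα} = f_i^β f_k^α − f_k^β f_i^α. -/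
open MeasureTheory Filter Matrix
open scoped Topology

noncomputable section

lemma aux_M {n m : ℕ} (A : Matrix (Fin m) (Fin n) ℝ) :
    (1 : Matrix (Fin n) (Fin n) ℝ) - (1 + Aᵀ * A)⁻¹ = Aᵀ * (1 + A * Aᵀ)⁻¹ * A := by
  have hU : IsUnit (1 + A * Aᵀ).det := by
    have h : (1 + A * Aᵀ).PosDef := by
      refine Matrix.PosDef.one.add_posSemidef ?_
      simpa using Matrix.posSemidef_self_mul_conjTranspose A
    exact h.det_pos.ne'.isUnit
  have h : (1 + Aᵀ * A)⁻¹ = 1 - Aᵀ * (1 + A * Aᵀ)⁻¹ * A := by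
    apply Matrix.inv_eq_right_inv
    have h1 : Aᵀ * ((1 + A * Aᵀ) * (1 + A * Aᵀ)⁻¹) * A = Aᵀ * A := by
      rw [Matrix.mul_nonsing_inv _ hU, Matrix.mul_one]
    have h2 : (1 + Aᵀ * A) * (1 - Aᵀ * (1 + A * Aᵀ)⁻¹ * A)
        = 1 + Aᵀ * A - Aᵀ * ((1 + A * Aᵀ) * (1 + A * Aᵀ)⁻¹) * A := by
      generalize (1 + A * Aᵀ)⁻¹ = V
      simp only [Matrix.mul_add, Matrix.add_mul, Matrix.mul_sub, Matrix.one_mul, Matrix.mul_one,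
        Matrix.mul_assoc]
    rw [h2, h1]; abel
  rw [h]; abel

lemma aux_sum {m : ℕ} (p q : Fin m → ℝ) (V a b : Fin m → Fin m → ℝ) (c : ℝ) :
    (∑ ν, ∑ μ, ∑ θ, ∑ γ, p ν * q μ * V θ γ * a μ γ * b ν θ * c) =
      ∑ θ, ∑ γ, V θ γ * (∑ μ, q μ * a μ γ) * (∑ ν, p ν * b ν θ) * c := by
  simp only [Finset.mul_sum, Finset.sum_mul]
  have := Fintype.sum_equiv
    (⟨fun x => (x.2.2.1, x.2.2.2, x.1, x.2.1), fun y => (y.2.2.1, y.2.2.2, y.1, y.2.1),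
      fun _ => rfl, fun _ => rfl⟩ :
      Fin m × Fin m × Fin m × Fin m ≃ Fin m × Fin m × Fin m × Fin m)
    (fun x => p x.1 * q x.2.1 * V x.2.2.1 x.2.2.2 * a x.2.1 x.2.2.2 * b x.1 x.2.2.1 * c)
    (fun y => V y.1 y.2.1 * (q y.2.2.2 * a y.2.2.2 y.2.1) * (p y.2.2.1 * b y.2.2.1 y.1) * c)
    (fun x => by simp only [Equiv.coe_fn_mk]; ring)
  simpa only [Fintype.sum_prod_type] using this

lemma aux_main {n m : ℕ} (A : Matrix (Fin m) (Fin n) ℝ) (V : Matrix (Fin m) (Fin m) ℝ)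
    (M : Matrix (Fin n) (Fin n) ℝ) (H : Fin m → Matrix (Fin n) (Fin n) ℝ)
    (hV : Vᵀ = V) (hM : M = Aᵀ * V * A) :
    (∑ i, ∑ j, ∑ k, ∑ l, ∑ α, ∑ β, M j i * M k l * V α β *
          (H β i j * H α k l - H β i k * H α l j)) =
      ∑ i, ∑ k, ∑ α, ∑ β, ∑ ν, ∑ μ, ∑ θ, ∑ γ,
        V α ν * V β μ * V θ γ *
          (∑ l, A μ l * H γ i l) * (∑ l, A ν l * H θ k l) *
          (A β i * A α k - A β k * A α i) := by
  have hN : ∀ γ i j, ∑ β, (∑ μ, V β μ * ∑ l, A μ l * H γ i l) * A β j = (H γ * M) i j := by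
    intro γ i j
    have : (H γ * M) = (H γ * Aᵀ * Vᵀ) * A := by rw [hV, hM]; simp only [Matrix.mul_assoc]
    rw [this]
    simp only [Matrix.mul_apply, Matrix.transpose_apply]
    refine Finset.sum_congr rfl fun β _ => ?_
    congr 1
    refine Finset.sum_congr rfl fun μ _ => ?_
    rw [mul_comm]
    congr 1
    exact Finset.sum_congr rfl fun l _ => mul_comm _ _
  have hR : ∀ i k, (∑ α, ∑ β, ∑ ν, ∑ μ, ∑ θ, ∑ γ,
        V α ν * V β μ * V θ γ *
          (∑ l, A μ l * H γ i l) * (∑ l, A ν l * H θ k l) *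
          (A β i * A α k - A β k * A α i)) =
      ∑ θ, ∑ γ, V θ γ * ((H γ * M) i i * (H θ * M) k k - (H γ * M) i k * (H θ * M) k i) := by
    intro i k
    simp only [← hN]
    simp only [fun α β => aux_sum (V α) (V β) V (fun μ γ => ∑ l, A μ l * H γ i l)
      (fun ν θ => ∑ l, A ν l * H θ k l) (A β i * A α k - A β k * A α i)]
    generalize hw : (fun γ i β => ∑ μ, V β μ * ∑ l, A μ l * H γ i l) = W
    have hw' : ∀ γ i β, ∑ μ, V β μ * ∑ l, A μ l * H γ i l = W γ i β := by
      intro γ i β; rw [← hw]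
    simp only [hw']
    simp only [Finset.sum_mul_sum]
    simp only [← Finset.sum_sub_distrib]
    simp only [Finset.mul_sum]
    have := Fintype.sum_equiv
      (⟨fun x => (x.2.2.1, x.2.2.2, x.2.1, x.1), fun y => (y.2.2.2, y.2.2.1, y.1, y.2.1),
        fun _ => rfl, fun _ => rfl⟩ :
        Fin m × Fin m × Fin m × Fin m ≃ Fin m × Fin m × Fin m × Fin m)
      (fun x => V x.2.2.1 x.2.2.2 * W x.2.2.2 i x.2.1 * W x.2.2.1 k x.1 *
        (A x.2.1 i * A x.1 k - A x.2.1 k * A x.1 i))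
      (fun y => V y.1 y.2.1 * (W y.2.1 i y.2.2.1 * A y.2.2.1 i * (W y.1 k y.2.2.2 * A y.2.2.2 k)
        - W y.2.1 i y.2.2.1 * A y.2.2.1 k * (W y.1 k y.2.2.2 * A y.2.2.2 i)))
      (fun x => by simp only [Equiv.coe_fn_mk]; ring)
    simpa only [Fintype.sum_prod_type] using this
  simp only [hR]
  simp only [mul_sub, Finset.sum_sub_distrib]
  simp only [Matrix.mul_apply, Finset.sum_mul_sum]
  simp only [Finset.mul_sum]
  congr 1
  · have := Fintype.sum_equiv
      (⟨fun x => (x.1, x.2.2.1, x.2.2.2.2.1, x.2.2.2.2.2, x.2.1, x.2.2.2.1),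
        fun y => (y.1, y.2.2.2.2.1, y.2.1, y.2.2.2.2.2, y.2.2.1, y.2.2.2.1),
        fun _ => rfl, fun _ => rfl⟩ :
        Fin n × Fin n × Fin n × Fin n × Fin m × Fin m ≃
          Fin n × Fin n × Fin m × Fin m × Fin n × Fin n)
      (fun (i, j, k, l, α, β) => M j i * M l k * V α β * (H β i j * H α k l))
      (fun (i, k, θ, γ, a, b) => V θ γ * (H γ i a * M a i * (H θ k b * M b k)))
      (fun x => by simp only [Equiv.coe_fn_mk]; ring)
    have hMs : ∀ k l, M k l = M l k := by
      have : Mᵀ = M := by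
        rw [hM]; simp only [Matrix.transpose_mul, Matrix.transpose_transpose, hV, Matrix.mul_assoc]
      intro k l
      exact (congrFun (congrFun this l) k)
    simp only [Fintype.sum_prod_type] at this
    rw [← this]
    refine Finset.sum_congr rfl fun i _ => Finset.sum_congr rfl fun j _ =>
      Finset.sum_congr rfl fun k _ => Finset.sum_congr rfl fun l _ => ?_
    rw [hMs k l]
  · have := Fintype.sum_equiv
      (⟨fun x => (x.1, x.2.2.2.1, x.2.2.2.2.1, x.2.2.2.2.2, x.2.2.1, x.2.1),
        fun y => (y.1, y.2.2.2.2.2, y.2.2.2.2.1, y.2.1, y.2.2.1, y.2.2.2.1),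
        fun _ => rfl, fun _ => rfl⟩ :
        Fin n × Fin n × Fin n × Fin n × Fin m × Fin m ≃
          Fin n × Fin n × Fin m × Fin m × Fin n × Fin n)
      (fun (i, j, k, l, α, β) => M j i * M k l * V α β * (H β i k * H α l j))
      (fun (i, k, θ, γ, a, b) => V θ γ * (H γ i a * M a k * (H θ k b * M b i)))
      (fun x => by simp only [Equiv.coe_fn_mk]; ring)
    simpa only [Fintype.sum_prod_type] using this

/-- Lemma 2.3(iv): pointwise,
Σ_{i,j,k,l,α,β} M_{ji} M_{kl} U^{αβ} (f_{ij}^β f_{kl}^α − f_{ik}^β f_{lj}^α)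
 = Σ_{i,k,α,β,ν,μ,θ,γ} U^{αν} U^{βμ} U^{θγ} ⟨Df^μ, Df_i^γ⟩ ⟨Df^ν, Df_k^θ⟩ F_{ik}^{βα}. -/
theorem lemma_2_3_iv (n m : ℕ) (f : Fin m → EuclideanSpace ℝ (Fin n) → ℝ)
    (hf : ∀ α, ContDiff ℝ 2 (f α)) :
    ∀ x : EuclideanSpace ℝ (Fin n),
      (∑ i, ∑ j, ∑ k, ∑ l, ∑ α, ∑ β, Mmat f x j i * Mmat f x k l * (Umat f x)⁻¹ α β *
          (pd2 (f β) i j x * pd2 (f α) k l x - pd2 (f β) i k x * pd2 (f α) l j x)) =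
      ∑ i, ∑ k, ∑ α, ∑ β, ∑ ν, ∑ μ, ∑ θ, ∑ γ,
        (Umat f x)⁻¹ α ν * (Umat f x)⁻¹ β μ * (Umat f x)⁻¹ θ γ *
          (∑ l, pd (f μ) l x * pd2 (f γ) i l x) * (∑ l, pd (f ν) l x * pd2 (f θ) k l x) *
          (pd (f β) i x * pd (f α) k x - pd (f β) k x * pd (f α) i x) := by
  intro x
  have hg : gmat f x = 1 + (Matrix.of fun α i => pd (f α) i x : Matrix (Fin m) (Fin n) ℝ)ᵀ *
      (Matrix.of fun α i => pd (f α) i x) := by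
    ext i j
    simp [gmat, Matrix.mul_apply, Matrix.one_apply]
  have hU : Umat f x = 1 + (Matrix.of fun α i => pd (f α) i x : Matrix (Fin m) (Fin n) ℝ) *
      (Matrix.of fun α i => pd (f α) i x)ᵀ := by
    ext i j
    simp [Umat, Matrix.mul_apply, Matrix.one_apply]
  refine aux_main (Matrix.of fun α i => pd (f α) i x) (Umat f x)⁻¹ (Matrix.of (Mmat f x))
    (fun α => Matrix.of fun i j => pd2 (f α) i j x) ?_ ?_
  · rw [Matrix.transpose_nonsing_inv, hU]
    simp
  · rw [hU, ← aux_M, ← hg]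
    ext i j
    simp [Mmat, Matrix.one_apply]
end
end
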